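/- Let f : X → Y and g : Y → Z be continuous maps between path-connected topological spaces. Then TC(g ∘ f) ≤ min{TC(f), TC(g)}. -/

import Mathlib

open scoped ENNReal

/-- Scott's pullback topological complexity of a continuous map `f : X → Y`: the least `n`
(or `∞`) such that `X × X` admits a cover by `n + 1` open sets, each carrying a continuous
map `s : Uᵢ → P(Y)` with `(s z) 0 = f z.1` and `(s z) 1 = f z.2`. -/
noncomputable def topComplexityMap {X Y : Type*} [TopologicalSpace X] [TopologicalSpace Y]
    (f : C(X, Y)) : ℕ∞ :=
  sInf {n : ℕ∞ | ∃ m : ℕ, n = (m : ℕ∞) ∧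
    ∃ U : Fin (m + 1) → Set (X × X), (∀ i, IsOpen (U i)) ∧ (⋃ i, U i) = Set.univ ∧
      ∀ i, ∃ s : C(U i, C(unitInterval, Y)),
        ∀ z : U i, (s z) 0 = f (z : X × X).1 ∧ (s z) 1 = f (z : X × X).2}

/-- A motion planner for `f` over `U ⊆ X × X`: a continuous choice, for `(x, x') ∈ U`, of a path
in `Y` from `f x` to `f x'`, i.e. a local section over `U` of the pullback along `f × f` of the
endpoint fibration `P(Y) → Y × Y`. -/
def HasMotionPlanner {X Y : Type*} [TopologicalSpace X] [TopologicalSpace Y]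
    (f : C(X, Y)) (U : Set (X × X)) : Prop :=
  ∃ s : C(U, C(unitInterval, Y)),
    ∀ z : U, (s z) 0 = f (z : X × X).1 ∧ (s z) 1 = f (z : X × X).2

section

variable {W X Y Z : Type*} [TopologicalSpace W] [TopologicalSpace X] [TopologicalSpace Y]
  [TopologicalSpace Z]

theorem HasMotionPlanner.postcomp {f : C(X, Y)} {U : Set (X × X)} (hU : HasMotionPlanner f U)
    (g : C(Y, Z)) : HasMotionPlanner (g.comp f) U := by
  obtain ⟨s, hs⟩ := hU
  exact ⟨.comp ⟨g.comp, g.continuous_postcomp⟩ s,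
    fun z => ⟨congrArg g (hs z).1, congrArg g (hs z).2⟩⟩

theorem HasMotionPlanner.precomp {g : C(Y, Z)} {U : Set (Y × Y)} (hU : HasMotionPlanner g U)
    (f : C(X, Y)) : HasMotionPlanner (g.comp f) (f.prodMap f ⁻¹' U) := by
  obtain ⟨s, hs⟩ := hU
  exact ⟨s.comp ((f.prodMap f).restrictPreimage U), fun z => hs (U.restrictPreimage _ z)⟩

theorem topComplexityMap_le_of_hasMotionPlanner_preimage {f : C(W, X)} {g : C(Y, Z)}
    (φ : C(W × W, Y × Y))
    (hφ : ∀ U, IsOpen U → HasMotionPlanner g U → HasMotionPlanner f (φ ⁻¹' U)) :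
    topComplexityMap f ≤ topComplexityMap g := by
  apply sInf_le_sInf
  rintro _ ⟨m, rfl, U, hU_open, hU_cover, hU⟩
  have preimage_cover : ⋃ i, φ ⁻¹' U i = Set.univ := by
    rw [← Set.preimage_iUnion, hU_cover, Set.preimage_univ]
  exact ⟨m, rfl, fun i => φ ⁻¹' U i, fun i => (hU_open i).preimage φ.continuous, preimage_cover,
    fun i => hφ (U i) (hU_open i) (hU i)⟩

theorem topComplexityMap_postcomp_le (f : C(X, Y)) (g : C(Y, Z)) :
    topComplexityMap (g.comp f) ≤ topComplexityMap f :=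
  topComplexityMap_le_of_hasMotionPlanner_preimage (.id _) fun _ _ hU => hU.postcomp g

theorem topComplexityMap_precomp_le (f : C(X, Y)) (g : C(Y, Z)) :
    topComplexityMap (g.comp f) ≤ topComplexityMap g :=
  topComplexityMap_le_of_hasMotionPlanner_preimage (f.prodMap f) fun _ _ hU => hU.precomp f

theorem topComplexityMap_comp_le_general (f : C(X, Y)) (g : C(Y, Z)) :
    topComplexityMap (g.comp f) ≤ min (topComplexityMap f) (topComplexityMap g) :=
  le_min (topComplexityMap_postcomp_le f g) (topComplexityMap_precomp_le f g)

end

/-- For continuous maps `f : X → Y` and `g : Y → Z` between path-connected spaces,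
`TC (g ∘ f) ≤ min (TC f) (TC g)`. -/
theorem topComplexityMap_comp_le
    {X Y Z : Type*} [TopologicalSpace X] [TopologicalSpace Y] [TopologicalSpace Z]
    [PathConnectedSpace X] [PathConnectedSpace Y] [PathConnectedSpace Z]
    (f : C(X, Y)) (g : C(Y, Z)) :
    topComplexityMap (g.comp f) ≤ min (topComplexityMap f) (topComplexityMap g) := by
  exact topComplexityMap_comp_le_general f g
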